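/- arXiv:2506.12463 — 3 statements merged into one kernel-verified Lean document; each statement's English description precedes it below -/
import Mathlib

section
/- Assume W is strongly connected, θ_j > 0 for at least one agent j, and ω ∈ (0,1). Then the influencer's social power sp₀ is a submodular set function: for all subsets T ⊆ S ⊆ V and every agent i ∈ V \\ S, sp₀(S ∪ {i}) − sp₀(S) ≤ sp₀(T ∪ {i}) − sp₀(T). -/
open Matrix Finset

/-- `H(S) = (I - ω Σ_{j∈S} e_j e_jᵀ) (I - Θ) W`. -/
noncomputable def Hmat {n : ℕ} (W : Matrix (Fin n) (Fin n) ℝ) (θ : Fin n → ℝ) (ω : ℝ)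
    (S : Finset (Fin n)) : Matrix (Fin n) (Fin n) ℝ :=
  (1 - Matrix.diagonal (fun i => if i ∈ S then ω else 0)) *
    ((1 - Matrix.diagonal θ) * W)

/-- `p₀(S) = (I - H(S))⁻¹ (I - Θ) ω Σ_{j∈S} e_j`. -/
noncomputable def p0vec {n : ℕ} (W : Matrix (Fin n) (Fin n) ℝ) (θ : Fin n → ℝ) (ω : ℝ)
    (S : Finset (Fin n)) : Fin n → ℝ :=
  ((1 - Hmat W θ ω S)⁻¹ * (1 - Matrix.diagonal θ)).mulVec
    (fun j => if j ∈ S then ω else 0)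

/-- The influencer's social power `sp₀(S) = (𝟙ᵀ p₀(S) + 1)/(n+1)`. -/
noncomputable def sp0 {n : ℕ} (W : Matrix (Fin n) (Fin n) ℝ) (θ : Fin n → ℝ) (ω : ℝ)
    (S : Finset (Fin n)) : ℝ :=
  ((∑ i, p0vec W θ ω S i) + 1) / (n + 1)

lemma aux_closed {n : ℕ} (W : Matrix (Fin n) (Fin n) ℝ) (hW0 : ∀ i j, 0 ≤ W i j)
    (A : Fin n → Prop) (hA : ∀ r l, A r → 0 < W r l → A l) (j : Fin n) (hj : A j) :
    ∀ (k : ℕ) (l : Fin n), 0 < (W ^ k) j l → A l := by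
  intro k
  induction k with
  | zero =>
    intro l h
    by_cases hjl : j = l
    · exact hjl ▸ hj
    · simp [hjl] at h
  | succ k ih =>
    intro l h
    rw [pow_succ, Matrix.mul_apply] at h
    obtain ⟨r, -, hr⟩ := Finset.exists_lt_of_sum_lt (s := Finset.univ)
      (f := fun _ : Fin n => (0 : ℝ)) (g := fun r => (W ^ k) j r * W r l) (by simpa using h)
    have h1 : 0 < W r l := by
      rcases (hW0 r l).lt_or_eq with h2 | h2
      · exact h2
      · simp [← h2] at hr
    exact hA r l (ih r (pos_of_mul_pos_left hr h1.le)) h1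

lemma aux_max {n : ℕ} (W : Matrix (Fin n) (Fin n) ℝ)
    (hW0 : ∀ i j, 0 ≤ W i j) (hW1 : ∀ i, ∑ j, W i j = 1)
    (hconn : ∀ i j : Fin n, ∃ k, 1 ≤ k ∧ 0 < (W ^ k) i j)
    (c : Fin n → ℝ) (hc0 : ∀ i, 0 ≤ c i) (hc1 : ∀ i, c i ≤ 1) (hc : ∃ i, c i < 1)
    (x : Fin n → ℝ) (hx : ∀ i, c i * (W *ᵥ x) i ≤ x i) : ∀ i, 0 ≤ x i := by
  obtain ⟨i0, hi0⟩ := hc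
  obtain ⟨m, -, hm⟩ := Finset.exists_min_image Finset.univ x ⟨i0, Finset.mem_univ _⟩
  have hm' : ∀ j, x m ≤ x j := fun j => hm j (Finset.mem_univ _)
  by_contra hneg
  push Not at hneg
  obtain ⟨i1, hi1⟩ := hneg
  have hmneg : x m < 0 := lt_of_le_of_lt (hm' i1) hi1
  have key : ∀ r, x r = x m → c r = 1 ∧ ∑ l, W r l * (x l - x m) = 0 := by
    intro r hr
    have e : ∑ l, W r l * (x l - x m) = (W *ᵥ x) r - x m := by
      simp only [mul_sub, Finset.sum_sub_distrib, ← Finset.sum_mul, hW1, one_mul]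
      rfl
    have h0 : 0 ≤ ∑ l, W r l * (x l - x m) :=
      Finset.sum_nonneg fun l _ => mul_nonneg (hW0 r l) (sub_nonneg.2 (hm' l))
    have h1 := hx r
    have h2 := hc0 r
    have h3 := hc1 r
    have hcr : c r = 1 := by
      by_contra hne
      have : c r < 1 := lt_of_le_of_ne h3 hne
      nlinarith
    refine ⟨hcr, ?_⟩
    rw [hcr, hr] at h1
    linarith
  have all : ∀ l, x l = x m := by
    intro l
    obtain ⟨k, -, hk⟩ := hconn m l
    refine aux_closed W hW0 (fun r => x r = x m) ?_ m rfl k l hk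
    intro r l hr hrl
    have h := (Finset.sum_eq_zero_iff_of_nonneg
      (fun l _ => mul_nonneg (hW0 r l) (sub_nonneg.2 (hm' l)))).1 (key r hr).2 l (Finset.mem_univ _)
    rcases mul_eq_zero.1 h with h | h
    · exact absurd h hrl.ne'
    · show x l = x m
      linarith
  linarith [(key i0 (all i0)).1]

lemma aux_Hmul {n : ℕ} (W : Matrix (Fin n) (Fin n) ℝ) (θ : Fin n → ℝ) (ω : ℝ)
    (S : Finset (Fin n)) (x : Fin n → ℝ) (j : Fin n) :
    (Hmat W θ ω S *ᵥ x) j =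
      ((1 - if j ∈ S then ω else 0) * (1 - θ j)) * (W *ᵥ x) j := by
  have e : ∀ d y : Fin n → ℝ, ((1 - Matrix.diagonal d) *ᵥ y) j = (1 - d j) * y j := by
    intro d y
    rw [Matrix.sub_mulVec, Matrix.one_mulVec, Pi.sub_apply, Matrix.mulVec_diagonal]
    ring
  unfold Hmat
  rw [← Matrix.mulVec_mulVec, ← Matrix.mulVec_mulVec, e, e, mul_assoc]

lemma aux_p0 {n : ℕ} (W : Matrix (Fin n) (Fin n) ℝ)
    (hW0 : ∀ i j, 0 ≤ W i j) (hW1 : ∀ i, ∑ j, W i j = 1)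
    (hconn : ∀ i j : Fin n, ∃ k, 1 ≤ k ∧ 0 < (W ^ k) i j)
    (θ : Fin n → ℝ) (ω : ℝ) (S : Finset (Fin n))
    (hc0 : ∀ j, 0 ≤ (1 - if j ∈ S then ω else 0) * (1 - θ j))
    (hc1 : ∀ j, (1 - if j ∈ S then ω else 0) * (1 - θ j) ≤ 1)
    (hc : ∃ j, (1 - if j ∈ S then ω else 0) * (1 - θ j) < 1) (j : Fin n) :
    p0vec W θ ω S j = ((1 - if j ∈ S then ω else 0) * (1 - θ j)) * (W *ᵥ p0vec W θ ω S) j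
      + (1 - θ j) * (if j ∈ S then ω else 0) := by
  have hu : IsUnit (1 - Hmat W θ ω S) := by
    rw [← Matrix.mulVec_injective_iff_isUnit]
    intro x y hxy
    have hz : Hmat W θ ω S *ᵥ (x - y) = x - y := by
      have : (1 - Hmat W θ ω S) *ᵥ (x - y) = 0 := by
        rw [Matrix.mulVec_sub]; exact sub_eq_zero.2 hxy
      rw [Matrix.sub_mulVec, Matrix.one_mulVec] at this
      exact (sub_eq_zero.1 this).symm
    have hz' : Hmat W θ ω S *ᵥ (y - x) = y - x := by
      rw [← neg_sub x y, Matrix.mulVec_neg, hz]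
    have h1 := aux_max W hW0 hW1 hconn _ hc0 hc1 hc (x - y)
      (fun i => by rw [← aux_Hmul, hz])
    have h2 := aux_max W hW0 hW1 hconn _ hc0 hc1 hc (y - x)
      (fun i => by rw [← aux_Hmul, hz'])
    funext i
    have a := h1 i
    have b := h2 i
    simp only [Pi.sub_apply] at a b
    linarith
  have h : (1 - Hmat W θ ω S) *ᵥ p0vec W θ ω S =
      (1 - Matrix.diagonal θ) *ᵥ (fun j => if j ∈ S then ω else 0) := by
    unfold p0vec
    rw [Matrix.mulVec_mulVec, ← Matrix.mul_assoc,
      Matrix.mul_nonsing_inv _ ((Matrix.isUnit_iff_isUnit_det _).1 hu), Matrix.one_mul]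
  have h' := congrFun h j
  rw [Matrix.sub_mulVec, Matrix.sub_mulVec, Matrix.one_mulVec, Matrix.one_mulVec,
    Pi.sub_apply, Pi.sub_apply, Matrix.mulVec_diagonal, aux_Hmul] at h'
  linarith

/-- The influencer's social power is a submodular set function. -/
theorem sp0_submodular
    (n : ℕ) (hn : 1 ≤ n) (W : Matrix (Fin n) (Fin n) ℝ)
    (hW0 : ∀ i j, 0 ≤ W i j) (hW1 : ∀ i, ∑ j, W i j = 1)
    (hconn : ∀ i j : Fin n, ∃ k, 1 ≤ k ∧ 0 < (W ^ k) i j)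
    (θ : Fin n → ℝ) (hθ : ∀ i, θ i ∈ Set.Icc (0 : ℝ) 1) (hθpos : ∃ j, 0 < θ j)
    (ω : ℝ) (hω : ω ∈ Set.Ioo (0 : ℝ) 1)
    (T S : Finset (Fin n)) (hTS : T ⊆ S) (i : Fin n) (hiS : i ∉ S) :
    sp0 W θ ω (insert i S) - sp0 W θ ω S ≤ sp0 W θ ω (insert i T) - sp0 W θ ω T := by
  obtain ⟨hω0, hω1⟩ := hω
  obtain ⟨j0, hj0⟩ := hθpos
  have ha0 : ∀ j, 0 ≤ 1 - θ j := fun j => by linarith [(hθ j).2]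
  have ha1 : ∀ j, 1 - θ j ≤ 1 := fun j => by linarith [(hθ j).1]
  have hd0 : ∀ (R : Finset (Fin n)) j, 0 ≤ (if j ∈ R then ω else 0) := by
    intro R j; split_ifs <;> linarith
  have hd1 : ∀ (R : Finset (Fin n)) j, (if j ∈ R then ω else 0) ≤ 1 := by
    intro R j; split_ifs <;> linarith
  have hc0 : ∀ (R : Finset (Fin n)) j, 0 ≤ (1 - if j ∈ R then ω else 0) * (1 - θ j) :=
    fun R j => mul_nonneg (by linarith [hd1 R j]) (ha0 j)
  have hca : ∀ (R : Finset (Fin n)) j, (1 - if j ∈ R then ω else 0) * (1 - θ j) ≤ 1 - θ j :=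
    fun R j => by nlinarith [hd0 R j, ha0 j]
  have hc1 : ∀ (R : Finset (Fin n)) j, (1 - if j ∈ R then ω else 0) * (1 - θ j) ≤ 1 :=
    fun R j => (hca R j).trans (ha1 j)
  have hc : ∀ (R : Finset (Fin n)), ∃ j, (1 - if j ∈ R then ω else 0) * (1 - θ j) < 1 :=
    fun R => ⟨j0, by linarith [hca R j0]⟩
  have hp := fun R => aux_p0 W hW0 hW1 hconn θ ω R (hc0 R) (hc1 R) (hc R)
  have hmax := fun R => aux_max W hW0 hW1 hconn _ (hc0 R) (hc1 R) (hc R)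
  have hWnn : ∀ x : Fin n → ℝ, (∀ j, 0 ≤ x j) → ∀ j, 0 ≤ (W *ᵥ x) j :=
    fun x hx j => by
      simp only [Matrix.mulVec, dotProduct]
      exact Finset.sum_nonneg fun l _ => mul_nonneg (hW0 j l) (hx l)
  have hWsub : ∀ (x y : Fin n → ℝ) j, (W *ᵥ (x - y)) j = (W *ᵥ x) j - (W *ᵥ y) j :=
    fun x y j => by rw [Matrix.mulVec_sub, Pi.sub_apply]
  have hWone : ∀ j, (W *ᵥ (1 : Fin n → ℝ)) j = 1 := fun j => by
    simp only [Matrix.mulVec, dotProduct, Pi.one_apply, mul_one]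
    exact hW1 j
  have hple : ∀ R j, 0 ≤ (1 - p0vec W θ ω R) j := by
    intro R
    refine hmax R _ fun j => ?_
    rw [hWsub, hWone, Pi.sub_apply, Pi.one_apply]
    have := hp R j
    have := ha1 j
    linarith
  have hWp : ∀ R j, 0 ≤ 1 - (W *ᵥ p0vec W θ ω R) j := by
    intro R j
    have := hWnn _ (hple R) j
    rwa [hWsub, hWone] at this
  have hdm : ∀ {A B : Finset (Fin n)}, A ⊆ B → ∀ j,
      (if j ∈ A then ω else 0) ≤ (if j ∈ B then ω else 0) := by
    intro A B h j
    by_cases h1 : j ∈ A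
    · simp [h1, h h1]
    · simp only [h1, if_false]; exact hd0 B j
  have hmono : ∀ {A B : Finset (Fin n)}, A ⊆ B → ∀ j,
      0 ≤ (p0vec W θ ω B - p0vec W θ ω A) j := by
    intro A B hAB
    refine hmax B _ fun j => ?_
    rw [hWsub, Pi.sub_apply]
    have h1 := hp A j
    have h2 := hp B j
    have h3 := mul_nonneg (mul_nonneg (ha0 j) (sub_nonneg.2 (hdm hAB j))) (hWp A j)
    linarith
  have main : ∀ j, 0 ≤ ((p0vec W θ ω (insert i T) - p0vec W θ ω T) -
      (p0vec W θ ω (insert i S) - p0vec W θ ω S)) j := by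
    refine hmax (insert i T) _ fun j => ?_
    have hiT : i ∉ T := fun h => hiS (hTS h)
    have e1 := hp T j
    have e2 := hp S j
    have e3 := hp (insert i T) j
    have e4 := hp (insert i S) j
    have hu := hWnn _ (hmono (Finset.subset_insert i S)) j
    have hST := hWnn _ (hmono hTS) j
    rw [hWsub] at hu hST
    simp only [hWsub, Pi.sub_apply]
    by_cases hji : j = i
    · subst hji
      simp only [hiS, hiT, Finset.mem_insert_self, if_true, if_false] at *
      have := mul_nonneg (mul_nonneg (ha0 j) hω0.le) hST
      linarith
    · simp only [Finset.mem_insert, hji, false_or] at *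
      have h3 := mul_nonneg (mul_nonneg (ha0 j) (sub_nonneg.2 (hdm hTS j))) hu
      linarith
  have hsum := Finset.sum_nonneg fun j (_ : j ∈ Finset.univ) => main j
  simp only [Pi.sub_apply, Finset.sum_sub_distrib] at hsum
  unfold sp0
  rw [← sub_div, ← sub_div]
  apply div_le_div_of_nonneg_right _ (by positivity)
  linarith
end

section
/- Suppose W = 𝟙 cᵀ with c_j > 0 for all j and Σ_j c_j = 1, let θ_i ∈ [0,1] for all i satisfy Σ_j c_j θ_j > 0 and the balance condition c_i (1 − θ_i) = c_j (1 − θ_j) for all i, j ∈ V, and let ω ∈ (0,1). Fix 1 ≤ K ≤ n and let S₁ ⊆ V be any K-element set consisting of indices of the K smallest stubbornness values, i.e., θ_i ≤ θ_j for every i ∈ S₁ and j ∉ S₁. Then S₁ maximizes the influencer's social power under the budget K: sp₀(S₁) ≥ sp₀(S) for every S ⊆ V with |S| ≤ K. -/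
open Matrix Finset

/-- The rank-one matrix `𝟙 cᵀ`. -/
def rankOne {n : ℕ} (c : Fin n → ℝ) : Matrix (Fin n) (Fin n) ℝ :=
  Matrix.of fun _ j => c j

lemma aux_inv {n : ℕ} (a c : Fin n → ℝ) (h : 1 - c ⬝ᵥ a ≠ 0) :
    (1 - vecMulVec a c)⁻¹ = 1 + (1 - c ⬝ᵥ a)⁻¹ • vecMulVec a c := by
  apply Matrix.inv_eq_right_inv
  have h2 : vecMulVec a c * vecMulVec a c = (c ⬝ᵥ a) • vecMulVec a c := by
    rw [vecMulVec_mul_vecMulVec]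
    ext i j
    simp [vecMulVec_apply]
    ring
  have : (1 - c ⬝ᵥ a)⁻¹ • vecMulVec a c - (1 - c ⬝ᵥ a)⁻¹ • (c ⬝ᵥ a) • vecMulVec a c
      = vecMulVec a c := by
    rw [← smul_sub]
    nth_rewrite 1 [← one_smul ℝ (vecMulVec a c)]
    rw [← sub_smul, smul_smul, inv_mul_cancel₀ h, one_smul]
  rw [mul_add, mul_one, mul_smul_comm, sub_mul, one_mul, h2, smul_sub, this]
  abel

lemma aux_H {n : ℕ} (c θ : Fin n → ℝ) (ω : ℝ) (S : Finset (Fin n)) :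
    Hmat (rankOne c) θ ω S =
      vecMulVec (fun i => (1 - if i ∈ S then ω else 0) * (1 - θ i)) c := by
  unfold Hmat
  rw [← Matrix.diagonal_one, Matrix.diagonal_sub, Matrix.diagonal_sub]
  ext i j
  rw [Matrix.diagonal_mul, Matrix.diagonal_mul, vecMulVec_apply]
  simp only [rankOne, Matrix.of_apply]
  ring

lemma aux_sp {n : ℕ} (c θ : Fin n → ℝ) (ω β : ℝ) (S : Finset (Fin n))
    (hβ : ∀ i, c i * (1 - θ i) = β)
    (hne : 1 - β * n + β * ω * S.card ≠ 0) :
    ∑ i, p0vec (rankOne c) θ ω S i =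
      ω * (∑ i ∈ S, (1 - θ i)) + (∑ i, (1 - θ i) - ω * (∑ i ∈ S, (1 - θ i))) *
        (β * ω * S.card / (1 - β * n + β * ω * S.card)) := by
  set a : Fin n → ℝ := fun i => (1 - if i ∈ S then ω else 0) * (1 - θ i) with ha
  have hca : c ⬝ᵥ a = β * n - β * ω * S.card := by
    have : ∀ i, c i * a i = β - if i ∈ S then β * ω else 0 := by
      intro i
      simp only [ha]
      rw [← hβ i]
      split_ifs <;> ring
    simp only [dotProduct, this]
    rw [Finset.sum_sub_distrib, Finset.sum_ite_mem]
    simp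
    ring
  have hne' : 1 - c ⬝ᵥ a ≠ 0 := by
    rw [hca]; convert hne using 1; ring
  set b : Fin n → ℝ := fun i => if i ∈ S then ω * (1 - θ i) else 0 with hb
  have hcb : c ⬝ᵥ b = β * ω * S.card := by
    have : ∀ i, c i * b i = if i ∈ S then β * ω else 0 := by
      intro i
      simp only [hb]
      rw [← hβ i]
      split_ifs <;> ring
    simp only [dotProduct, this]
    rw [Finset.sum_ite_mem]
    simp
    ring
  have hsb : ∑ i, b i = ω * ∑ i ∈ S, (1 - θ i) := by
    simp only [hb]
    rw [Finset.sum_ite_mem, Finset.mul_sum]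
    simp
  have hsa : ∑ i, a i = ∑ i, (1 - θ i) - ω * ∑ i ∈ S, (1 - θ i) := by
    rw [← hsb, ← Finset.sum_sub_distrib]
    apply Finset.sum_congr rfl
    intro i _
    simp only [ha, hb]
    split_ifs <;> ring
  have hp : p0vec (rankOne c) θ ω S = b + ((1 - c ⬝ᵥ a)⁻¹ * (c ⬝ᵥ b)) • a := by
    unfold p0vec
    rw [aux_H, ← ha, aux_inv a c hne', ← Matrix.mulVec_mulVec]
    have : (1 - Matrix.diagonal θ).mulVec (fun j => if j ∈ S then ω else 0) = b := by
      rw [← Matrix.diagonal_one, Matrix.diagonal_sub]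
      ext i
      rw [Matrix.mulVec_diagonal]
      simp only [hb]
      split_ifs <;> ring
    rw [this, Matrix.add_mulVec, Matrix.one_mulVec, Matrix.smul_mulVec, Matrix.vecMulVec_mulVec]
    ext i
    simp
    ring
  rw [hp]
  simp only [Pi.add_apply, Pi.smul_apply, smul_eq_mul]
  rw [Finset.sum_add_distrib, ← Finset.mul_sum, hsa, hsb, hcb, hca]
  have : 1 - (β * n - β * ω * S.card) = 1 - β * n + β * ω * S.card := by ring
  rw [this]
  ring

lemma aux_sum {n : ℕ} (d : Fin n → ℝ) (hd : ∀ i, 0 ≤ d i) (S T : Finset (Fin n))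
    (hc : S.card ≤ T.card) (h : ∀ i ∈ T, ∀ j ∉ T, d j ≤ d i) :
    ∑ i ∈ S, d i ≤ ∑ i ∈ T, d i := by
  rw [← Finset.sum_sdiff_le_sum_sdiff]
  have hcd : (S \ T).card ≤ (T \ S).card := by
    have h1 := Finset.card_sdiff_add_card_inter S T
    have h2 := Finset.card_sdiff_add_card_inter T S
    rw [Finset.inter_comm] at h2
    omega
  rcases (S \ T).eq_empty_or_nonempty with he | hne
  · rw [he]; simp; exact Finset.sum_nonneg fun i _ => hd i
  · obtain ⟨m, hm, hmax⟩ := Finset.exists_max_image (S \ T) d hne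
    have hmT := (Finset.mem_sdiff.1 hm).2
    calc ∑ i ∈ S \ T, d i ≤ (S \ T).card • d m := Finset.sum_le_card_nsmul _ _ _ hmax
      _ ≤ (T \ S).card • d m := nsmul_le_nsmul_left (hd m) hcd
      _ ≤ _ := Finset.card_nsmul_le_sum _ _ _
        fun i hi => h i (Finset.mem_sdiff.1 hi).1 m hmT

/-- Rank-one weights with balance `c_i(1-θ_i)` constant: picking the `K` least stubborn
agents maximizes the influencer's social power. -/
theorem rank_one_balanced_optimal
    (n : ℕ) (hn : 1 ≤ n) (c : Fin n → ℝ) (hc : ∀ j, 0 < c j) (hc1 : ∑ j, c j = 1)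
    (θ : Fin n → ℝ) (hθ : ∀ i, θ i ∈ Set.Icc (0 : ℝ) 1) (hcθ : 0 < ∑ j, c j * θ j)
    (hbal : ∀ i j : Fin n, c i * (1 - θ i) = c j * (1 - θ j))
    (ω : ℝ) (hω : ω ∈ Set.Ioo (0 : ℝ) 1)
    (K : ℕ) (hK : 1 ≤ K) (hKn : K ≤ n)
    (S₁ : Finset (Fin n)) (hcard : S₁.card = K)
    (hbot : ∀ i ∈ S₁, ∀ j ∉ S₁, θ i ≤ θ j) :
    ∀ S : Finset (Fin n), S.card ≤ K →
      sp0 (rankOne c) θ ω S ≤ sp0 (rankOne c) θ ω S₁ := by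
  intro S hS
  have hω0 := hω.1
  have hω1 := hω.2
  set β := c ⟨0, hn⟩ * (1 - θ ⟨0, hn⟩) with hβd
  have hβ : ∀ i, c i * (1 - θ i) = β := fun i => hbal i _
  have hd : ∀ i, 0 ≤ 1 - θ i := fun i => sub_nonneg.2 (hθ i).2
  have hβ0 : 0 ≤ β := mul_nonneg (hc _).le (hd _)
  have ht : 0 < 1 - β * n := by
    have : ∑ j, c j * θ j = 1 - β * n := by
      have h1 : ∀ j, c j * θ j = c j - β := fun j => by rw [← hβ j]; ring
      simp only [h1]
      rw [Finset.sum_sub_distrib, hc1]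
      simp
      ring
    rwa [← this]
  have hpos : ∀ T : Finset (Fin n), 0 < 1 - β * n + β * ω * T.card := fun T => by positivity
  unfold sp0
  rw [aux_sp c θ ω β S hβ (hpos S).ne', aux_sp c θ ω β S₁ hβ (hpos S₁).ne']
  have hD : ∑ i ∈ S, (1 - θ i) ≤ ∑ i ∈ S₁, (1 - θ i) :=
    aux_sum (fun i => 1 - θ i) hd S S₁ (by omega)
      fun i hi j hj => by have := hbot i hi j hj; linarith
  have hDV : ∑ i ∈ S₁, (1 - θ i) ≤ ∑ i, (1 - θ i) :=
    Finset.sum_le_sum_of_subset_of_nonneg (Finset.subset_univ _) fun i _ _ => hd i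
  have hD0 : 0 ≤ ∑ i ∈ S₁, (1 - θ i) := Finset.sum_nonneg fun i _ => hd i
  have hcS : (S.card : ℝ) ≤ S₁.card := by exact_mod_cast hcard ▸ hS
  have hx : β * ω * S.card ≤ β * ω * S₁.card := by gcongr
  have hl : β * ω * S.card / (1 - β * n + β * ω * S.card) ≤
      β * ω * S₁.card / (1 - β * n + β * ω * S₁.card) := by
    rw [div_le_div_iff₀ (hpos S) (hpos S₁)]
    nlinarith
  have hl1 : β * ω * S.card / (1 - β * n + β * ω * S.card) ≤ 1 := by
    rw [div_le_one (hpos S)]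
    linarith
  generalize β * ω * S.card / (1 - β * n + β * ω * S.card) = l at *
  generalize β * ω * S₁.card / (1 - β * n + β * ω * S₁.card) = l₁ at *
  generalize ∑ i ∈ S₁, (1 - θ i) = D₁ at *
  generalize ∑ i ∈ S, (1 - θ i) = D at *
  generalize ∑ i, (1 - θ i) = V at *
  have e1 : 0 ≤ (1 - l) * (ω * (D₁ - D)) :=
    mul_nonneg (sub_nonneg.2 hl1) (mul_nonneg hω0.le (sub_nonneg.2 hD))
  have e2 : 0 ≤ (l₁ - l) * (V - ω * D₁) :=
    mul_nonneg (sub_nonneg.2 hl) (by nlinarith)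
  apply div_le_div_of_nonneg_right _ (by positivity)
  nlinarith
end

section
/- Assume homogeneous stubbornness θ_i = θ ∈ (0,1) for all i ∈ V, ω ∈ (0,1), and let W be a symmetric circulant row-stochastic matrix: W = C(w₀, w₁, …, w_{n−1}) with w_k ≥ 0, Σ_k w_k = 1 and w_k = w_{n−k} for 1 ≤ k ≤ n−1. Then: (i) the matrix M = I − (1 − θ) W is invertible; (ii) its inverse is a symmetric circulant matrix, M^{-1} = C(m₀, m₁, …, m_{n−1}) with m_k = m_{n−k} for 1 ≤ k ≤ n−1; and (iii) if j* ∈ {2,…,n} minimizes m_{j−1} over j ∈ {2,…,n}, then the pair {1, j*} maximizes the influencer's social power under budget K = 2: sp₀({1, j*}) ≥ sp₀(S) for every S ⊆ V with |S| ≤ 2. -/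
open Matrix Finset

/-- The circulant matrix `C(m₀,…,m_{n-1})` whose `(i,j)` entry is `m_{(j-i) mod n}`. -/
def Cmat {n : ℕ} (m : Fin n → ℝ) : Matrix (Fin n) (Fin n) ℝ :=
  Matrix.of fun i j => m (j - i)

/-- `M = I - (1-θ) W` for a circulant weight generator `w`. -/
noncomputable def Mring (n : ℕ) (θ : ℝ) (w : Fin n → ℝ) : Matrix (Fin n) (Fin n) ℝ :=
  1 - (1 - θ) • Cmat w


theorem aux_unit {n : ℕ} (H : Matrix (Fin n) (Fin n) ℝ) (h0 : ∀ i j, 0 ≤ H i j)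
    (h1 : ∀ i, ∑ j, H i j < 1) : IsUnit (1 - H) := by
  rw [Matrix.isUnit_iff_isUnit_det, isUnit_iff_ne_zero]
  apply det_ne_zero_of_sum_row_lt_diag
  intro i
  have e : ∑ j ∈ Finset.univ.erase i, ‖(1 - H) i j‖ = ∑ j ∈ Finset.univ.erase i, H i j := by
    apply Finset.sum_congr rfl
    intro j hj
    have hne : i ≠ j := (Finset.ne_of_mem_erase hj).symm
    simp [Matrix.sub_apply, Matrix.one_apply_ne hne, abs_of_nonneg (h0 i j)]
  rw [e]
  have h2 := h1 i
  rw [← Finset.add_sum_erase _ _ (Finset.mem_univ i)] at h2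
  have h3 := le_abs_self ((1 - H) i i)
  rw [Real.norm_eq_abs]
  simp only [Matrix.sub_apply, Matrix.one_apply_eq] at h3 ⊢
  linarith

/-- maximum principle -/
theorem aux_max_s15 {n : ℕ} (W : Matrix (Fin n) (Fin n) ℝ) (h0 : ∀ i j, 0 ≤ W i j)
    (h1 : ∀ i, ∑ j, W i j = 1) (a : ℝ) (ha0 : 0 ≤ a) (ha1 : a < 1) (k : Fin n)
    (x : Fin n → ℝ) (hx : ∀ i, x i = (if i = k then 1 else 0) + a * ∑ j, W i j * x j) :
    (∀ i, 0 ≤ x i) ∧ ∀ i, x i ≤ x k := by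
  haveI : Nonempty (Fin n) := ⟨k⟩
  have hnn : ∀ i, 0 ≤ x i := by
    obtain ⟨i, hi⟩ := Finite.exists_min x
    have hs : x i ≤ ∑ j, W i j * x j := by
      calc x i = ∑ j, W i j * x i := by rw [← Finset.sum_mul, h1, one_mul]
        _ ≤ _ := Finset.sum_le_sum fun j _ => mul_le_mul_of_nonneg_left (hi j) (h0 i j)
    have h2 := hx i
    have h3 : (0:ℝ) ≤ if i = k then 1 else 0 := by split_ifs <;> norm_num
    have h4 := mul_le_mul_of_nonneg_left hs ha0
    have : 0 ≤ x i := by nlinarith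
    intro j; exact this.trans (hi j)
  refine ⟨hnn, ?_⟩
  obtain ⟨i, hi⟩ := Finite.exists_max x
  have hs : ∑ j, W i j * x j ≤ x i := by
    calc _ ≤ ∑ j, W i j * x i :=
          Finset.sum_le_sum fun j _ => mul_le_mul_of_nonneg_left (hi j) (h0 i j)
      _ = x i := by rw [← Finset.sum_mul, h1, one_mul]
  by_cases hik : i = k
  · subst hik; exact hi
  · have h2 := hx i
    rw [if_neg hik] at h2
    have h4 := mul_le_mul_of_nonneg_left hs ha0
    have h5 : x i ≤ 0 := by nlinarith
    intro j
    exact (hi j).trans (h5.trans (hnn k))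

theorem aux_sum_s15 {n : ℕ} (W : Matrix (Fin n) (Fin n) ℝ) (h0 : ∀ i j, 0 ≤ W i j)
    (h1 : ∀ i, ∑ j, W i j = 1) (h1' : ∀ j, ∑ i, W i j = 1)
    (θ : ℝ) (hθ : θ ∈ Set.Ioo (0 : ℝ) 1) (ω : ℝ) (hω : ω ∈ Set.Ioo (0 : ℝ) 1)
    (S : Finset (Fin n)) (p q : Fin n → ℝ)
    (hpq : ∀ i, p i - (1 - θ) * ∑ j, W i j * p j = q i)
    (hq0 : ∀ i, i ∉ S → q i = 0)
    (hq1 : ∀ i, i ∈ S → ω * p i + (1 - ω) * q i = (1 - θ) * ω) :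
    sp0 W (fun _ => θ) ω S = ((∑ i, q i) / θ + 1) / (n + 1) := by
  obtain ⟨ht0, ht1⟩ := hθ
  obtain ⟨hw0, hw1⟩ := hω
  have hH : ∀ i j, Hmat W (fun _ => θ) ω S i j
      = (1 - if i ∈ S then ω else 0) * ((1 - θ) * W i j) := by
    intro i j
    have e1 : (1 - Matrix.diagonal (fun i => if i ∈ S then ω else 0) : Matrix (Fin n) (Fin n) ℝ)
      = Matrix.diagonal (fun i => 1 - if i ∈ S then ω else 0) := by
      rw [← Matrix.diagonal_one, Matrix.diagonal_sub]
    have e2 : (1 - Matrix.diagonal (fun _ => θ) : Matrix (Fin n) (Fin n) ℝ)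
      = Matrix.diagonal (fun _ => 1 - θ) := by
      rw [← Matrix.diagonal_one, Matrix.diagonal_sub]
    rw [Hmat, e1, e2, Matrix.diagonal_mul, Matrix.diagonal_mul]
  have hc : ∀ i, 0 ≤ (1 - if i ∈ S then ω else 0) ∧ (1 - if i ∈ S then ω else 0) ≤ 1 := by
    intro i; split_ifs <;> constructor <;> linarith
  have hU : IsUnit (1 - Hmat W (fun _ => θ) ω S) := by
    apply aux_unit
    · intro i j
      rw [hH]
      exact mul_nonneg (hc i).1 (mul_nonneg (by linarith) (h0 i j))
    · intro i
      simp only [hH]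
      rw [← Finset.mul_sum, ← Finset.mul_sum, h1]
      nlinarith [(hc i).1, (hc i).2]
  have hdet := (Matrix.isUnit_iff_isUnit_det _).1 hU
  have hp : p0vec W (fun _ => θ) ω S = p := by
    have e2 : (1 - Matrix.diagonal (fun _ => θ) : Matrix (Fin n) (Fin n) ℝ)
      = Matrix.diagonal (fun _ => 1 - θ) := by
      rw [← Matrix.diagonal_one, Matrix.diagonal_sub]
    have key : (1 - Hmat W (fun _ => θ) ω S).mulVec p =
        (1 - Matrix.diagonal (fun _ => θ)).mulVec (fun j => if j ∈ S then ω else 0) := by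
      rw [e2]
      funext i
      rw [Matrix.sub_mulVec, Matrix.one_mulVec, Matrix.mulVec_diagonal]
      simp only [Pi.sub_apply, Matrix.mulVec, dotProduct, hH, mul_assoc]
      rw [← Finset.mul_sum, ← Finset.mul_sum]
      have h2 := hpq i
      by_cases hi : i ∈ S
      · have h3 := hq1 i hi
        simp only [hi, if_true]
        rw [← h2] at h3
        linarith
      · have h3 := hq0 i hi
        simp only [hi, if_false]
        linarith
    rw [p0vec, ← Matrix.mulVec_mulVec, ← key, Matrix.mulVec_mulVec,
      Matrix.nonsing_inv_mul _ hdet, Matrix.one_mulVec]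
  have hsum : ∑ i, q i = θ * ∑ i, p i := by
    have : ∑ i, ∑ j, W i j * p j = ∑ j, p j := by
      rw [Finset.sum_comm]
      apply Finset.sum_congr rfl
      intro j _
      rw [← Finset.sum_mul, h1', one_mul]
    simp only [← hpq]
    rw [Finset.sum_sub_distrib, ← Finset.mul_sum, this]
    ring
  rw [sp0, hp, hsum]
  congr 2
  field_simp

/-- Symmetric circulant weights: `M = I - (1-θ)W` is invertible with symmetric circulant
inverse, and the pair `{first agent, agent minimizing m_{j-1}}` is optimal for `K = 2`. -/
theorem ring_graph_two_link_optimal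
    (n : ℕ) (hn : 2 ≤ n) (w : Fin n → ℝ)
    (hw0 : ∀ k, 0 ≤ w k) (hw1 : ∑ k, w k = 1) (hwsym : ∀ k, w (-k) = w k)
    (θ : ℝ) (hθ : θ ∈ Set.Ioo (0 : ℝ) 1) (ω : ℝ) (hω : ω ∈ Set.Ioo (0 : ℝ) 1)
    (jstar : Fin n) (hjs : jstar ≠ ⟨0, by omega⟩)
    (hmin : ∀ j : Fin n, j ≠ ⟨0, by omega⟩ →
      (Mring n θ w)⁻¹ ⟨0, by omega⟩ jstar ≤ (Mring n θ w)⁻¹ ⟨0, by omega⟩ j) :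
    IsUnit (Mring n θ w) ∧
    (Mring n θ w)⁻¹ = Cmat (fun k => (Mring n θ w)⁻¹ ⟨0, by omega⟩ k) ∧
    (∀ k : Fin n, (Mring n θ w)⁻¹ ⟨0, by omega⟩ (-k) = (Mring n θ w)⁻¹ ⟨0, by omega⟩ k) ∧
    (∀ S : Finset (Fin n), S.card ≤ 2 →
      sp0 (Cmat w) (fun _ => θ) ω S
        ≤ sp0 (Cmat w) (fun _ => θ) ω {⟨0, by omega⟩, jstar}) := by
  haveI : NeZero n := ⟨by omega⟩
  have hz : (⟨0, by omega⟩ : Fin n) = 0 := rfl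
  simp only [hz] at hjs hmin ⊢
  have hθ' := hθ
  have hω' := hω
  obtain ⟨ht0, ht1⟩ := hθ'
  obtain ⟨ho0, ho1⟩ := hω'
  have hW0 : ∀ i j, 0 ≤ (Cmat w) i j := fun i j => hw0 _
  have hWs : ∀ i j, (Cmat w) i j = (Cmat w) j i := by
    intro i j
    simp only [Cmat, Matrix.of_apply]
    rw [← hwsym, neg_sub]
  have hW1 : ∀ i, ∑ j, (Cmat w) i j = 1 := by
    intro i
    simp only [Cmat, Matrix.of_apply]
    rw [← hw1]
    exact Equiv.sum_comp (Equiv.subRight i) w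
  have hW1' : ∀ j, ∑ i, (Cmat w) i j = 1 := by
    intro j
    rw [← hW1 j]
    exact Finset.sum_congr rfl fun i _ => hWs i j
  have hU : IsUnit (Mring n θ w) := by
    apply aux_unit
    · intro i j
      exact mul_nonneg (by linarith) (hW0 i j)
    · intro i
      simp only [Matrix.smul_apply, smul_eq_mul]
      rw [← Finset.mul_sum, hW1]
      linarith
  have hdet := (Matrix.isUnit_iff_isUnit_det _).1 hU
  have hMN := Matrix.mul_nonsing_inv _ hdet
  have hshift : ∀ c i j, (Mring n θ w)⁻¹ (i + c) (j + c) = (Mring n θ w)⁻¹ i j := by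
    intro c i j
    have e : (Mring n θ w).submatrix (Equiv.addRight c) (Equiv.addRight c) = Mring n θ w := by
      ext i j
      simp [Mring, Cmat, Matrix.one_apply]
    have e2 := Matrix.inv_submatrix_equiv (Mring n θ w) (Equiv.addRight c) (Equiv.addRight c)
    rw [e] at e2
    have := congrFun (congrFun e2 i) j
    simpa using this.symm
  have hsymm : ∀ i j, (Mring n θ w)⁻¹ i j = (Mring n θ w)⁻¹ j i := by
    have e : (Mring n θ w)ᵀ = Mring n θ w := by
      ext i j
      simp only [Mring, Matrix.transpose_apply, Matrix.sub_apply, Matrix.smul_apply]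
      rw [hWs j i, Matrix.one_apply, Matrix.one_apply]
      simp only [eq_comm]
    have e2 := Matrix.transpose_nonsing_inv (Mring n θ w)
    rw [e] at e2
    intro i j
    exact congrFun (congrFun e2 j) i
  have hcirc : ∀ i j, (Mring n θ w)⁻¹ i j = (Mring n θ w)⁻¹ 0 (j - i) := by
    intro i j
    rw [← hshift i 0 (j - i)]
    simp
  have hMNe : ∀ i k, (Mring n θ w)⁻¹ i k - (1 - θ) * ∑ j, Cmat w i j * (Mring n θ w)⁻¹ j k
      = if i = k then 1 else 0 := by
    intro i k
    have h := congrFun (congrFun hMN i) k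
    rw [Matrix.one_apply] at h
    rw [← h]
    conv_rhs => rw [Mring]
    rw [Matrix.sub_mul, Matrix.one_mul, Matrix.smul_mul, Matrix.sub_apply, Matrix.smul_apply,
      Matrix.mul_apply, smul_eq_mul]
    rfl
  refine ⟨hU, ?_, ?_, ?_⟩
  · ext i j
    exact hcirc i j
  · intro k
    rw [hsymm 0 k, hcirc k 0, zero_sub]
  generalize (Mring n θ w)⁻¹ = N at *
  obtain ⟨hn0, hnm⟩ := aux_max_s15 (Cmat w) hW0 hW1 (1 - θ) (by linarith) (by linarith) 0
    (fun i => N i 0) (fun i => by have := hMNe i 0; linarith)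
  have hn0' : ∀ k, 0 ≤ N 0 k := fun k => by rw [hsymm]; exact hn0 k
  have hnm' : ∀ k, N 0 k ≤ N 0 0 := fun k => by rw [hsymm]; exact hnm k
  have hdiag : ∀ i, N i i = N 0 0 := fun i => by rw [hcirc]; simp
  -- general linear step
  have hlin : ∀ q : Fin n → ℝ, ∀ i, (∑ k, N i k * q k)
      - (1 - θ) * ∑ j, Cmat w i j * (∑ k, N j k * q k) = q i := by
    intro q i
    have : ∑ j, Cmat w i j * (∑ k, N j k * q k) = ∑ k, (∑ j, Cmat w i j * N j k) * q k := by
      simp only [Finset.mul_sum, Finset.sum_mul]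
      rw [Finset.sum_comm]
      simp only [mul_assoc]
    rw [this, Finset.mul_sum, ← Finset.sum_sub_distrib]
    have : ∀ k, N i k * q k - (1 - θ) * ((∑ j, Cmat w i j * N j k) * q k)
        = if i = k then q k else 0 := by
      intro k
      rw [← mul_assoc, ← sub_mul, hMNe]
      simp
    simp [this]
  have hden : ∀ d, 0 < 1 - ω + ω * (N 0 0 + N 0 d) := fun d => by
    have := mul_nonneg ho0.le (add_nonneg (hn0' 0) (hn0' d))
    linarith
  have hden1 : 0 < 1 - ω + ω * N 0 0 := by
    have := mul_nonneg ho0.le (hn0' 0)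
    linarith
  have hpair : ∀ i j, i ≠ j → sp0 (Cmat w) (fun _ => θ) ω {i, j}
      = (2 * ((1 - θ) * ω / (1 - ω + ω * (N 0 0 + N 0 (j - i)))) / θ + 1) / (n + 1) := by
    intro i j hij
    have hd := hden (j - i)
    set c := (1 - θ) * ω / (1 - ω + ω * (N 0 0 + N 0 (j - i))) with hc
    have hc' : (1 - ω + ω * (N 0 0 + N 0 (j - i))) * c = (1 - θ) * ω := by
      rw [hc]; field_simp
    have hs : ∀ f : Fin n → ℝ, ∑ k, f k * (if k ∈ ({i, j} : Finset (Fin n)) then c else 0)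
        = (f i + f j) * c := by
      intro f
      simp only [mul_ite, mul_zero]
      rw [Finset.sum_ite_mem, Finset.univ_inter, Finset.sum_pair hij]
      ring
    rw [aux_sum_s15 (Cmat w) hW0 hW1 hW1' θ hθ ω hω {i, j} _
      (fun k => if k ∈ ({i, j} : Finset (Fin n)) then c else 0) (hlin _)]
    · have := hs (fun _ => 1)
      simp only [one_mul] at this
      rw [this]
      norm_num
    · intro k hk
      simp only [hk, if_false]
    · intro k hk
      rw [hs]
      simp only [hk, if_true]
      have : N k i + N k j = N 0 0 + N 0 (j - i) := by
        rcases Finset.mem_insert.1 hk with h | h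
        · rw [h, hdiag, hcirc i j]
        · rw [Finset.mem_singleton.1 h, hdiag, hsymm j i, hcirc i j, add_comm]
      rw [this, ← hc']
      ring
  have hsingle : ∀ i, sp0 (Cmat w) (fun _ => θ) ω {i}
      = ((1 - θ) * ω / (1 - ω + ω * N 0 0) / θ + 1) / (n + 1) := by
    intro i
    set c := (1 - θ) * ω / (1 - ω + ω * N 0 0) with hc
    have hc' : (1 - ω + ω * N 0 0) * c = (1 - θ) * ω := by
      rw [hc]; field_simp
    have hs : ∀ f : Fin n → ℝ, ∑ k, f k * (if k ∈ ({i} : Finset (Fin n)) then c else 0)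
        = f i * c := by
      intro f
      simp
    rw [aux_sum_s15 (Cmat w) hW0 hW1 hW1' θ hθ ω hω {i} _
      (fun k => if k ∈ ({i} : Finset (Fin n)) then c else 0) (hlin _)]
    · have := hs (fun _ => 1)
      simp only [one_mul] at this
      rw [this]
    · intro k hk
      simp only [hk, if_false]
    · intro k hk
      rw [hs]
      simp only [hk, if_true]
      rw [Finset.mem_singleton.1 hk, hdiag, ← hc']
      ring
  have hempty : sp0 (Cmat w) (fun _ => θ) ω ∅ = (0 / θ + 1) / (n + 1) := by
    rw [aux_sum_s15 (Cmat w) hW0 hW1 hW1' θ hθ ω hω ∅ _ (fun _ => 0) (hlin _)]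
    · simp
    · intro k hk
      rfl
    · intro k hk
      simp at hk
  have hnum : 0 < (1 - θ) * ω := mul_pos (by linarith) ho0
  have hds := hden jstar
  intro S hS
  rw [hpair 0 jstar (Ne.symm hjs), sub_zero]
  have h3 : S.card = 0 ∨ S.card = 1 ∨ S.card = 2 := by omega
  rcases h3 with h | h | h
  · rw [Finset.card_eq_zero.1 h, hempty]
    gcongr
    positivity
  · obtain ⟨i, rfl⟩ := Finset.card_eq_one.1 h
    rw [hsingle]
    gcongr (?_ / θ + 1) / _
    rw [← mul_div_assoc, div_le_div_iff₀ hden1 hds]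
    have h5 := mul_le_mul_of_nonneg_left (hnm' jstar) ho0.le
    have h6 : 1 - ω + ω * (N 0 0 + N 0 jstar) ≤ 2 * (1 - ω + ω * N 0 0) := by linarith
    have := mul_le_mul_of_nonneg_left h6 hnum.le
    linarith
  · obtain ⟨i, j, hij, rfl⟩ := Finset.card_eq_two.1 h
    rw [hpair i j hij]
    have := hmin (j - i) (sub_ne_zero.2 hij.symm)
    gcongr
end
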